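/- In the bounded-degree uniform attachment process with m ≥ 2, for any s ∈ ℕ, any integer r ≥ 3 and any n_0, with high probability G_n contains at least s cycles of length r all of whose vertices lie in [n] \ [n_0]. -/

import Mathlib

open MeasureTheory ProbabilityTheory Filter Topology
open scoped ENNReal

/-- The degree of a vertex in a simple graph on `ℕ` (the number of its neighbours). -/
noncomputable def graphDeg (g : SimpleGraph ℕ) (v : ℕ) : ℕ := (g.neighborSet v).ncard

/-- The complete graph on the vertex set `[m] = {1,…,m}`, viewed as a simple graph on `ℕ`. -/
def initGraph (m : ℕ) : SimpleGraph ℕ :=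
  SimpleGraph.fromRel (fun a b => a ∈ Finset.Icc 1 m ∧ b ∈ Finset.Icc 1 m)

/-- The graph obtained from `g` by joining the (new) vertex `v` to every vertex of `S`. -/
def attachStep (g : SimpleGraph ℕ) (v : ℕ) (S : Finset ℕ) : SimpleGraph ℕ :=
  g ⊔ SimpleGraph.fromRel (fun a b => a = v ∧ b ∈ S)

/-- The set of vertices of `[n] = {1,…,n}` whose degree in `g` is strictly less than `d`. -/
noncomputable def lowDegSet (d : ℕ) (g : SimpleGraph ℕ) (n : ℕ) : Finset ℕ :=
  (Finset.Icc 1 n).filter (fun v => graphDeg g v < d)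

/-- `IsUAProcess m d μ G` says that `(G n)_{n ≥ m}` (as random graphs on `ℕ`, with `G n`
supported on the vertex set `[n] = {1,…,n}`) is the bounded-degree uniform attachment
process: `G m` is the complete graph on `[m]`, and `G (n+1)` is obtained from `G n` by
joining the new vertex `n+1` to a uniformly chosen `m`-element subset of the set of
vertices of `G n` of degree less than `d`, conditionally on `G n` and independently of
the past (note that `G n` determines the whole past of the process). -/
def IsUAProcess (m d : ℕ) {Ω : Type*} [MeasurableSpace Ω] (μ : Measure Ω)
    (G : ℕ → Ω → SimpleGraph ℕ) : Prop :=
  (∀ n g, MeasurableSet {ω | G n ω = g}) ∧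
  (∀ ω, G m ω = initGraph m) ∧
  (∀ n, m ≤ n → ∀ g : SimpleGraph ℕ, ∀ S : Finset ℕ,
    S ⊆ lowDegSet d g n → S.card = m →
    μ ({ω | G (n + 1) ω = attachStep g (n + 1) S} ∩ {ω | G n ω = g})
      = μ {ω | G n ω = g} / (((lowDegSet d g n).card.choose m : ℝ≥0∞)))

/-- The number of cycles of length `r` in `g` all of whose vertices are `> n₀`. -/
noncomputable def cycleCountOutside (g : SimpleGraph ℕ) (r n₀ : ℕ) : ℕ :=
  {C : g.Subgraph | C.verts ⊆ {v : ℕ | n₀ < v} ∧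
    Nonempty (C.coe ≃g SimpleGraph.cycleGraph r)}.ncard

section AttachStep

variable {g : SimpleGraph ℕ} {n m d : ℕ} {S : Finset ℕ}

theorem attachStep_adj {v a b : ℕ} :
    (attachStep g v S).Adj a b ↔ g.Adj a b ∨ a ≠ b ∧ (a = v ∧ b ∈ S ∨ b = v ∧ a ∈ S) := by
  simp [attachStep, SimpleGraph.fromRel_adj]

theorem le_attachStep (v : ℕ) : g ≤ attachStep g v S := le_sup_left

/-- All edges of `g` have their endpoints in `[n]`. -/
def SupportedOn (n : ℕ) (g : SimpleGraph ℕ) : Prop := ∀ a b, g.Adj a b → a ∈ Finset.Icc 1 n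

theorem SupportedOn.finite_neighborSet (hg : SupportedOn n g) (v : ℕ) :
    (g.neighborSet v).Finite :=
  (Finset.finite_toSet (Finset.Icc 1 n)).subset fun w hw => hg w v hw.symm

theorem SupportedOn.attach (hg : SupportedOn n g) (hS : S ⊆ Finset.Icc 1 n) :
    SupportedOn (n + 1) (attachStep g (n + 1) S) := by
  intro a b hab
  rw [attachStep_adj] at hab
  rw [Finset.mem_Icc]
  rcases hab with h | ⟨-, ⟨rfl, -⟩ | ⟨-, h⟩⟩
  · have := Finset.mem_Icc.1 (hg a b h); omega
  · omega
  · have := Finset.mem_Icc.1 (hS h); omega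

/-- Attaching the vertex `n + 1` does not change adjacency among the vertices of `[n]`. -/
theorem attachStep_adj_of_le {a b : ℕ} (ha : a ≤ n) (hb : b ≤ n) :
    (attachStep g (n + 1) S).Adj a b ↔ g.Adj a b := by
  rw [attachStep_adj]
  constructor
  · rintro (h | ⟨-, ⟨rfl, -⟩ | ⟨rfl, -⟩⟩)
    · exact h
    · omega
    · omega
  · exact Or.inl

theorem SupportedOn.attachStep_adj_new (hg : SupportedOn n g) (hS : S ⊆ Finset.Icc 1 n) {b : ℕ} :
    (attachStep g (n + 1) S).Adj (n + 1) b ↔ b ∈ S := by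
  rw [attachStep_adj]
  constructor
  · rintro (h | ⟨-, ⟨-, h⟩ | ⟨-, h⟩⟩)
    · have := Finset.mem_Icc.1 (hg _ _ h); omega
    · exact h
    · have := Finset.mem_Icc.1 (hS h); omega
  · intro h
    have := Finset.mem_Icc.1 (hS h)
    exact Or.inr ⟨by omega, Or.inl ⟨rfl, h⟩⟩

theorem SupportedOn.graphDeg_attachStep_new (hg : SupportedOn n g) (hS : S ⊆ Finset.Icc 1 n) :
    graphDeg (attachStep g (n + 1) S) (n + 1) = S.card := by
  have : (attachStep g (n + 1) S).neighborSet (n + 1) = (S : Set ℕ) := by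
    ext b
    exact hg.attachStep_adj_new hS
  rw [graphDeg, this, Set.ncard_coe_finset]

theorem graphDeg_attachStep_of_notMem {v : ℕ} (hv : v ≤ n) (hvS : v ∉ S) :
    graphDeg (attachStep g (n + 1) S) v = graphDeg g v := by
  have : (attachStep g (n + 1) S).neighborSet v = g.neighborSet v := by
    ext b
    simp only [SimpleGraph.mem_neighborSet, attachStep_adj]
    constructor
    · rintro (h | ⟨-, ⟨rfl, -⟩ | ⟨-, h⟩⟩)
      · exact h
      · omega
      · exact absurd h hvS
    · exact Or.inl
  rw [graphDeg, this, graphDeg]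

theorem SupportedOn.graphDeg_attachStep_of_mem (hg : SupportedOn n g) {v : ℕ} (hv : v ≤ n)
    (hvS : v ∈ S) : graphDeg (attachStep g (n + 1) S) v = graphDeg g v + 1 := by
  have : (attachStep g (n + 1) S).neighborSet v = insert (n + 1) (g.neighborSet v) := by
    ext b
    simp only [SimpleGraph.mem_neighborSet, attachStep_adj, Set.mem_insert_iff]
    constructor
    · rintro (h | ⟨-, ⟨rfl, -⟩ | ⟨h, -⟩⟩)
      · exact Or.inr h
      · omega
      · exact Or.inl h
    · rintro (rfl | h)
      · exact Or.inr ⟨by omega, Or.inr ⟨rfl, hvS⟩⟩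
      · exact Or.inl h
  rw [graphDeg, this, Set.ncard_insert_of_notMem _ (hg.finite_neighborSet v), graphDeg]
  intro h
  have := Finset.mem_Icc.1 (hg _ _ (SimpleGraph.Adj.symm h))
  omega

theorem SupportedOn.graphDeg_attachStep (hg : SupportedOn n g) {v : ℕ} (hv : v ≤ n) :
    graphDeg (attachStep g (n + 1) S) v = graphDeg g v + if v ∈ S then 1 else 0 := by
  split_ifs with h
  · exact hg.graphDeg_attachStep_of_mem hv h
  · exact graphDeg_attachStep_of_notMem hv h

theorem SupportedOn.attachStep_inj {g' : SimpleGraph ℕ} {S' : Finset ℕ} (hg : SupportedOn n g)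
    (hg' : SupportedOn n g') (hS : S ⊆ Finset.Icc 1 n) (hS' : S' ⊆ Finset.Icc 1 n)
    (h : attachStep g (n + 1) S = attachStep g' (n + 1) S') : g = g' ∧ S = S' := by
  refine ⟨?_, ?_⟩
  · have key : ∀ a b, a ≤ n → b ≤ n → (g.Adj a b ↔ g'.Adj a b) := fun a b ha hb => by
      rw [← attachStep_adj_of_le (S := S) ha hb, h, attachStep_adj_of_le ha hb]
    ext a b
    constructor <;> intro hab
    · exact (key a b (Finset.mem_Icc.1 (hg a b hab)).2 (Finset.mem_Icc.1 (hg b a hab.symm)).2).1 hab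
    · exact (key a b (Finset.mem_Icc.1 (hg' a b hab)).2
        (Finset.mem_Icc.1 (hg' b a hab.symm)).2).2 hab
  · ext b
    rw [← hg.attachStep_adj_new hS, h, hg'.attachStep_adj_new hS']

/-- Deterministic bounds satisfied by every graph that the attachment process can reach at
time `n`. -/
structure Admissible (m n : ℕ) (g : SimpleGraph ℕ) : Prop where
  supportedOn : SupportedOn n g
  deg_add_le : ∀ v ∈ Finset.Icc 1 n, graphDeg g v + v ≤ n + m
  sum_deg_le : ∑ v ∈ Finset.Icc 1 n, graphDeg g v ≤ 2 * m * n

theorem admissible_initGraph (m : ℕ) : Admissible m m (initGraph m) := by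
  have hsupp : SupportedOn m (initGraph m) := by
    intro a b hab
    simp only [initGraph, SimpleGraph.fromRel_adj] at hab
    tauto
  have hdeg : ∀ v, graphDeg (initGraph m) v ≤ m := fun v => by
    have := Set.ncard_le_ncard (s := (initGraph m).neighborSet v) (t := (Finset.Icc 1 m : Set ℕ))
      (fun w hw => hsupp w v hw.symm) (Finset.finite_toSet _)
    rw [Set.ncard_coe_finset, Nat.card_Icc] at this
    simpa [graphDeg] using this
  refine ⟨hsupp, fun v hv => ?_, ?_⟩
  · have := Finset.mem_Icc.1 hv
    have := hdeg v
    omega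
  · calc ∑ v ∈ Finset.Icc 1 m, graphDeg (initGraph m) v ≤ ∑ v ∈ Finset.Icc 1 m, m :=
          Finset.sum_le_sum fun v _ => hdeg v
      _ ≤ 2 * m * m := by simp; nlinarith

theorem Admissible.attach (hg : Admissible m n g) (hS : S ⊆ Finset.Icc 1 n)
    (hSm : S.card = m) : Admissible m (n + 1) (attachStep g (n + 1) S) := by
  refine ⟨hg.supportedOn.attach hS, fun v hv => ?_, ?_⟩
  · rcases Nat.lt_or_ge n v with h | h
    · obtain rfl : v = n + 1 := by have := Finset.mem_Icc.1 hv; omega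
      rw [hg.supportedOn.graphDeg_attachStep_new hS]
      omega
    · rw [hg.supportedOn.graphDeg_attachStep h]
      have := hg.deg_add_le v (by rw [Finset.mem_Icc] at hv ⊢; omega)
      split_ifs <;> omega
  · rw [Finset.sum_Icc_succ_top (by omega), hg.supportedOn.graphDeg_attachStep_new hS,
      Finset.sum_congr rfl fun v hv =>
        hg.supportedOn.graphDeg_attachStep (S := S) (Finset.mem_Icc.1 hv).2,
      Finset.sum_add_distrib, Finset.sum_ite_mem, Finset.inter_eq_right.2 hS]
    have := hg.sum_deg_le
    simp only [Finset.sum_const, smul_eq_mul, mul_one, hSm]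
    linarith

theorem lowDegSet_subset : lowDegSet d g n ⊆ Finset.Icc 1 n := Finset.filter_subset _ _

theorem card_lowDegSet_le : (lowDegSet d g n).card ≤ n := by
  simpa using Finset.card_le_card (lowDegSet_subset (d := d) (g := g) (n := n))

theorem Admissible.le_card_lowDegSet (hg : Admissible m n g) (hd : 2 * m < d) (hn : m ≤ n) :
    m ≤ (lowDegSet d g n).card := by
  have hsub : Finset.Icc (n - m + 1) n ⊆ lowDegSet d g n := fun v hv => by
    have hv' := Finset.mem_Icc.1 hv
    have hmem : v ∈ Finset.Icc 1 n := Finset.mem_Icc.2 (by omega)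
    have := hg.deg_add_le v hmem
    exact Finset.mem_filter.2 ⟨hmem, by omega⟩
  have := Finset.card_le_card hsub
  rw [Nat.card_Icc] at this
  omega

theorem Admissible.le_mul_card_lowDegSet (hg : Admissible m n g) (hd : 2 * m < d) :
    n ≤ (2 * m + 1) * (lowDegSet d g n).card := by
  have h1 : ((Finset.Icc 1 n).filter fun v => ¬ graphDeg g v < d).card * (2 * m + 1)
      ≤ 2 * m * n := by
    refine le_trans ?_ hg.sum_deg_le
    rw [← smul_eq_mul]
    refine (Finset.card_nsmul_le_sum _ _ _ fun v hv => ?_).trans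
      (Finset.sum_le_sum_of_subset (Finset.filter_subset _ _))
    have := (Finset.mem_filter.1 hv).2
    omega
  have h2 := Finset.card_filter_add_card_filter_not (s := Finset.Icc 1 n)
    (fun v => graphDeg g v < d)
  rw [Nat.card_Icc] at h2
  rw [lowDegSet]
  simp only [Nat.add_sub_cancel] at h2
  nlinarith

end AttachStep

section UniformSubset

/-- The average of `f` over the `m`-element subsets of `A`. -/
noncomputable def subsetAvg (A : Finset ℕ) (m : ℕ) (f : Finset ℕ → ℝ) : ℝ :=
  (∑ S ∈ A.powersetCard m, f S) / (A.card.choose m : ℝ)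

variable {A : Finset ℕ} {m : ℕ} {f f' : Finset ℕ → ℝ}

theorem subsetAvg_mono (h : ∀ S ⊆ A, S.card = m → f S ≤ f' S) :
    subsetAvg A m f ≤ subsetAvg A m f' := by
  refine div_le_div_of_nonneg_right (Finset.sum_le_sum fun S hS => ?_) (Nat.cast_nonneg _)
  rw [Finset.mem_powersetCard] at hS
  exact h S hS.1 hS.2

theorem subsetAvg_congr (h : ∀ S ⊆ A, S.card = m → f S = f' S) :
    subsetAvg A m f = subsetAvg A m f' :=
  le_antisymm (subsetAvg_mono fun S hS hm => (h S hS hm).le)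
    (subsetAvg_mono fun S hS hm => (h S hS hm).ge)

theorem subsetAvg_const (h : m ≤ A.card) (c : ℝ) : subsetAvg A m (fun _ => c) = c := by
  have : (A.card.choose m : ℝ) ≠ 0 := by exact_mod_cast (Nat.choose_pos h).ne'
  rw [subsetAvg, Finset.sum_const, Finset.card_powersetCard, nsmul_eq_mul]
  field_simp

theorem subsetAvg_add :
    subsetAvg A m (fun S => f S + f' S) = subsetAvg A m f + subsetAvg A m f' := by
  simp only [subsetAvg, Finset.sum_add_distrib, add_div]

theorem subsetAvg_sub :
    subsetAvg A m (fun S => f S - f' S) = subsetAvg A m f - subsetAvg A m f' := by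
  simp only [subsetAvg, Finset.sum_sub_distrib, sub_div]

theorem subsetAvg_mul_const (c : ℝ) :
    subsetAvg A m (fun S => f S * c) = subsetAvg A m f * c := by
  simp only [subsetAvg, ← Finset.sum_mul]
  ring

theorem subsetAvg_sum {ι : Type*} (s : Finset ι) (F : ι → Finset ℕ → ℝ) :
    subsetAvg A m (fun S => ∑ i ∈ s, F i S) = ∑ i ∈ s, subsetAvg A m (F i) := by
  simp only [subsetAvg, ← Finset.sum_div]
  rw [Finset.sum_comm]

theorem subsetAvg_mem (hm : 1 ≤ m) (hA : m ≤ A.card) {v : ℕ} (hv : v ∈ A) :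
    subsetAvg A m (fun S => if v ∈ S then 1 else 0) = m / A.card := by
  have h := Finset.card_filter_powersetCard_subset {v} A m (by simpa using hv) (by simpa using hm)
  simp only [Finset.singleton_subset_iff, Finset.card_singleton] at h
  rw [subsetAvg, Finset.sum_boole, h]
  have hc : (A.card.choose m : ℝ) ≠ 0 := by exact_mod_cast (Nat.choose_pos hA).ne'
  have hA0 : (A.card : ℝ) ≠ 0 := by norm_cast; omega
  rw [div_eq_div_iff hc hA0]
  obtain ⟨k, rfl⟩ : ∃ k, m = k + 1 := ⟨m - 1, by omega⟩
  obtain ⟨a, ha⟩ : ∃ a, A.card = a + 1 := ⟨A.card - 1, by omega⟩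
  rw [ha]
  have := Nat.add_one_mul_choose_eq a k
  simp only [Nat.add_sub_cancel]
  rw [mul_comm, mul_comm ((k + 1 : ℕ) : ℝ)]
  exact_mod_cast this

theorem subsetAvg_mem_mem (hm : 2 ≤ m) (hA : m ≤ A.card) {u v : ℕ} (hu : u ∈ A) (hv : v ∈ A)
    (huv : u ≠ v) : subsetAvg A m (fun S => if u ∈ S ∧ v ∈ S then 1 else 0) =
      m * (m - 1) / (A.card * (A.card - 1)) := by
  have h := Finset.card_filter_powersetCard_subset {u, v} A m
    (by simp [Finset.insert_subset_iff, hu, hv]) (by rwa [Finset.card_pair huv])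
  simp only [Finset.insert_subset_iff, Finset.singleton_subset_iff, Finset.card_pair huv] at h
  rw [subsetAvg, Finset.sum_boole, h]
  have hc : (A.card.choose m : ℝ) ≠ 0 := by exact_mod_cast (Nat.choose_pos hA).ne'
  obtain ⟨k, rfl⟩ : ∃ k, m = k + 2 := ⟨m - 2, by omega⟩
  obtain ⟨a, ha⟩ : ∃ a, A.card = a + 2 := ⟨A.card - 2, by omega⟩
  rw [ha] at hc ⊢
  have h1 := Nat.add_one_mul_choose_eq a k
  have h2 := Nat.add_one_mul_choose_eq (a + 1) (k + 1)
  have h1' : ((a : ℝ) + 1) * a.choose k = (a + 1).choose (k + 1) * (k + 1) := by exact_mod_cast h1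
  have h2' : ((a : ℝ) + 1 + 1) * (a + 1).choose (k + 1) =
      (a + 1 + 1).choose (k + 1 + 1) * (k + 1 + 1) := by exact_mod_cast h2
  have e : ((a + 2 : ℕ) : ℝ) * (((a + 2 : ℕ) : ℝ) - 1) = (a + 2) * (a + 1) := by push_cast; ring
  rw [e, div_eq_div_iff hc (by positivity)]
  simp only [Nat.add_sub_cancel]
  push_cast
  linear_combination ((a : ℝ) + 2) * h1' + (k + 1 : ℝ) * h2'

end UniformSubset

section Paths

variable {g g' : SimpleGraph ℕ} {n₀ n n' m d K : ℕ} {S : Finset ℕ} {p : ℕ → ℕ} {u v : ℕ}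

/-- `p 0, …, p K` is a path of `g` with vertices in `(n₀, n]`. -/
structure IsPathIn (g : SimpleGraph ℕ) (n₀ n K : ℕ) (p : ℕ → ℕ) : Prop where
  lt : ∀ i ≤ K, n₀ < p i
  le : ∀ i ≤ K, p i ≤ n
  adj : ∀ i < K, g.Adj (p i) (p (i + 1))
  inj : ∀ i ≤ K, ∀ j ≤ K, p i = p j → i = j

theorem IsPathIn.mono (h : IsPathIn g n₀ n K p) (hg : g ≤ g') (hn : n ≤ n') :
    IsPathIn g' n₀ n' K p :=
  ⟨h.lt, fun i hi => (h.le i hi).trans hn, fun i hi => hg (h.adj i hi), h.inj⟩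

theorem IsPathIn.extend (h : IsPathIn g n₀ n K p) (hg : g ≤ g') (hadj : g'.Adj (p K) (n + 1)) :
    IsPathIn g' n₀ (n + 1) (K + 1) (Function.update p (K + 1) (n + 1)) := by
  have hold : ∀ i ≤ K, Function.update p (K + 1) (n + 1) i = p i := fun i hi =>
    Function.update_of_ne (by omega) _ _
  have hnew : Function.update p (K + 1) (n + 1) (K + 1) = n + 1 := Function.update_self _ _ _
  refine ⟨fun i hi => ?_, fun i hi => ?_, fun i hi => ?_, fun i hi j hj hij => ?_⟩
  · rcases Nat.lt_or_ge K i with hi' | hi'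
    · obtain rfl : i = K + 1 := by omega
      have := h.lt K le_rfl
      have := h.le K le_rfl
      omega
    · rw [hold i hi']; exact h.lt i hi'
  · rcases Nat.lt_or_ge K i with hi' | hi'
    · obtain rfl : i = K + 1 := by omega
      omega
    · rw [hold i hi']; exact (h.le i hi').trans (Nat.le_succ n)
  · rw [hold i (by omega)]
    rcases Nat.lt_or_ge i K with hi' | hi'
    · rw [hold (i + 1) (by omega)]; exact hg (h.adj i hi')
    · obtain rfl : i = K := by omega
      rwa [hnew]
  · rcases Nat.lt_or_ge K i with hi' | hi' <;> rcases Nat.lt_or_ge K j with hj' | hj'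
    · omega
    · obtain rfl : i = K + 1 := by omega
      rw [hold j hj', hnew] at hij
      have := h.le j hj'
      omega
    · obtain rfl : j = K + 1 := by omega
      rw [hold i hi', hnew] at hij
      have := h.le i hi'
      omega
    · rw [hold i hi', hold j hj'] at hij
      exact h.inj i hi' j hj' hij

/-- There is a path with `K` edges from `u` to `v` in `(n₀, n]` whose end `v` has degree at most
`m` and whose start `u` has degree at most `m + 1`. -/
def OpenPath (m n₀ n K : ℕ) (g : SimpleGraph ℕ) (u v : ℕ) : Prop :=
  ∃ p, IsPathIn g n₀ n K p ∧ p 0 = u ∧ p K = v ∧ graphDeg g v ≤ m ∧ graphDeg g u ≤ m + 1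

theorem OpenPath.end_mem (h : OpenPath m n₀ n K g u v) : v ∈ Finset.Icc 1 n := by
  obtain ⟨p, hp, -, rfl, -⟩ := h
  have := hp.lt K le_rfl
  exact Finset.mem_Icc.2 ⟨by omega, hp.le K le_rfl⟩

theorem OpenPath.start_mem (h : OpenPath m n₀ n K g u v) : u ∈ Finset.Icc 1 n := by
  obtain ⟨p, hp, rfl, -⟩ := h
  have := hp.lt 0 (Nat.zero_le _)
  exact Finset.mem_Icc.2 ⟨by omega, hp.le 0 (Nat.zero_le _)⟩

theorem OpenPath.end_mem_lowDegSet (hd : m + 1 < d) (h : OpenPath m n₀ n K g u v) :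
    v ∈ lowDegSet d g n := by
  refine Finset.mem_filter.2 ⟨h.end_mem, ?_⟩
  obtain ⟨p, -, -, -, hv, -⟩ := h
  omega

theorem OpenPath.start_mem_lowDegSet (hd : m + 1 < d) (h : OpenPath m n₀ n K g u v) :
    u ∈ lowDegSet d g n := by
  refine Finset.mem_filter.2 ⟨h.start_mem, ?_⟩
  obtain ⟨p, -, -, -, -, hu⟩ := h
  omega

theorem OpenPath.start_ne_end (hK : 1 ≤ K) (h : OpenPath m n₀ n K g u v) : u ≠ v := by
  obtain ⟨p, hp, rfl, rfl, -⟩ := h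
  intro h
  have := hp.inj 0 (Nat.zero_le _) K le_rfl h
  omega

theorem OpenPath.survive (h : OpenPath m n₀ n K g u v) (hu : u ∉ S) (hv : v ∉ S) :
    OpenPath m n₀ (n + 1) K (attachStep g (n + 1) S) u v := by
  have hun := (Finset.mem_Icc.1 h.start_mem).2
  have hvn := (Finset.mem_Icc.1 h.end_mem).2
  obtain ⟨p, hp, hpu, hpv, hdv, hdu⟩ := h
  refine ⟨p, hp.mono (le_attachStep _) (Nat.le_succ n), hpu, hpv, ?_, ?_⟩
  · rwa [graphDeg_attachStep_of_notMem hvn hv]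
  · rwa [graphDeg_attachStep_of_notMem hun hu]

theorem OpenPath.extend (h : OpenPath m n₀ n K g u v) (hg : SupportedOn n g)
    (hS : S ⊆ Finset.Icc 1 n) (hSm : S.card = m) (hv : v ∈ S) (hu : u ∉ S ∨ u = v) :
    OpenPath m n₀ (n + 1) (K + 1) (attachStep g (n + 1) S) u (n + 1) := by
  have hun := (Finset.mem_Icc.1 h.start_mem).2
  obtain ⟨p, hp, hpu, hpv, hdv, hdu⟩ := h
  refine ⟨_, hp.extend (le_attachStep _) ?_, ?_, Function.update_self _ _ _, ?_, ?_⟩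
  · rw [hpv]
    exact ((hg.attachStep_adj_new hS).2 hv).symm
  · rw [Function.update_of_ne (by omega), hpu]
  · rw [hg.graphDeg_attachStep_new hS, hSm]
  · rcases hu with hu | rfl
    · rwa [graphDeg_attachStep_of_notMem hun hu]
    · rw [hg.graphDeg_attachStep_of_mem hun hv]
      omega

theorem openPath_new (hg : SupportedOn n g) (hn : n₀ ≤ n) (hS : S ⊆ Finset.Icc 1 n)
    (hSm : S.card = m) :
    OpenPath m n₀ (n + 1) 0 (attachStep g (n + 1) S) (n + 1) (n + 1) := by
  refine ⟨fun _ => n + 1, ⟨?_, ?_, ?_, ?_⟩, rfl, rfl, ?_, ?_⟩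
  · intros; omega
  · intros; omega
  · intros; omega
  · intros; omega
  · rw [hg.graphDeg_attachStep_new hS, hSm]
  · rw [hg.graphDeg_attachStep_new hS, hSm]; omega

/-- `v` is the largest vertex of a cycle of `g` of length `K + 2` with all vertices above `n₀`. -/
def IsCycleTop (n₀ K : ℕ) (g : SimpleGraph ℕ) (v : ℕ) : Prop :=
  ∃ p, IsPathIn g n₀ v (K + 1) p ∧ p (K + 1) = v ∧ g.Adj v (p 0)

theorem OpenPath.isCycleTop (h : OpenPath m n₀ n K g u v) (hg : SupportedOn n g)
    (hS : S ⊆ Finset.Icc 1 n) (hu : u ∈ S) (hv : v ∈ S) :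
    IsCycleTop n₀ K (attachStep g (n + 1) S) (n + 1) := by
  obtain ⟨p, hp, hpu, hpv, -⟩ := h
  refine ⟨_, hp.extend (le_attachStep _) ?_, Function.update_self _ _ _, ?_⟩
  · rw [hpv]
    exact ((hg.attachStep_adj_new hS).2 hv).symm
  · rw [Function.update_of_ne (by omega), hpu]
    exact (hg.attachStep_adj_new hS).2 hu

theorem isCycleTop_attachStep (hv : v ≤ n) :
    IsCycleTop n₀ K (attachStep g (n + 1) S) v ↔ IsCycleTop n₀ K g v := by
  constructor
  · rintro ⟨p, hp, hpv, hadj⟩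
    have hle : ∀ i ≤ K + 1, p i ≤ n := fun i hi => (hp.le i hi).trans hv
    refine ⟨p, ⟨hp.lt, hp.le, fun i hi => ?_, hp.inj⟩, hpv, ?_⟩
    · exact (attachStep_adj_of_le (hle i hi.le) (hle (i + 1) hi)).1 (hp.adj i hi)
    · exact (attachStep_adj_of_le hv (hle 0 (Nat.zero_le _))).1 hadj
  · rintro ⟨p, hp, hpv, hadj⟩
    exact ⟨p, hp.mono (le_attachStep _) le_rfl, hpv, le_attachStep _ hadj⟩

open Classical in
/-- The end vertices of the open paths with `K` edges. -/
noncomputable def openEnds (m n₀ n K : ℕ) (g : SimpleGraph ℕ) : Finset ℕ :=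
  (Finset.Icc 1 n).filter fun v => ∃ u, OpenPath m n₀ n K g u v

open Classical in
/-- The vertices of `[N]` that are the largest vertex of a cycle of length `K + 2`. -/
noncomputable def cycleTops (n₀ K N : ℕ) (g : SimpleGraph ℕ) : Finset ℕ :=
  (Finset.Icc 1 N).filter (IsCycleTop n₀ K g)

theorem mem_openEnds : v ∈ openEnds m n₀ n K g ↔ ∃ u, OpenPath m n₀ n K g u v := by
  simp only [openEnds, Finset.mem_filter, and_iff_right_iff_imp]
  rintro ⟨u, hu⟩
  exact hu.end_mem

theorem exists_openPath_start (m n₀ n K : ℕ) (g : SimpleGraph ℕ) :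
    ∃ first : ℕ → ℕ, ∀ v ∈ openEnds m n₀ n K g, OpenPath m n₀ n K g (first v) v := by
  have hex : ∀ v, ∃ u, v ∈ openEnds m n₀ n K g → OpenPath m n₀ n K g u v := fun v => by
    by_cases hv : v ∈ openEnds m n₀ n K g
    · obtain ⟨u, hu⟩ := mem_openEnds.1 hv
      exact ⟨u, fun _ => hu⟩
    · exact ⟨0, fun h => absurd h hv⟩
  choose first hfirst using hex
  exact ⟨first, hfirst⟩

theorem card_openEnds_le : (openEnds m n₀ n K g).card ≤ n := by
  simpa using Finset.card_le_card (t := Finset.Icc 1 n) fun v hv =>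
    let ⟨_, hu⟩ := mem_openEnds.1 hv
    hu.end_mem

theorem mem_cycleTops {N : ℕ} :
    v ∈ cycleTops n₀ K N g ↔ (1 ≤ v ∧ v ≤ N) ∧ IsCycleTop n₀ K g v := by
  simp only [cycleTops, Finset.mem_filter, Finset.mem_Icc]

theorem cycleTops_mono {N : ℕ} (h : N ≤ n) : cycleTops n₀ K N g ⊆ cycleTops n₀ K n g := by
  intro v
  rw [mem_cycleTops, mem_cycleTops]
  exact fun hv => ⟨⟨hv.1.1, hv.1.2.trans h⟩, hv.2⟩

theorem cycleTops_attachStep {N : ℕ} (h : N ≤ n) :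
    cycleTops n₀ K N (attachStep g (n + 1) S) = cycleTops n₀ K N g := by
  ext v
  rw [mem_cycleTops, mem_cycleTops]
  exact and_congr_right fun hv => isCycleTop_attachStep (hv.2.trans h)

theorem card_cycleTops_attachStep_of_isCycleTop
    (h : IsCycleTop n₀ K (attachStep g (n + 1) S) (n + 1)) :
    (cycleTops n₀ K (n + 1) (attachStep g (n + 1) S)).card = (cycleTops n₀ K n g).card + 1 := by
  rw [← cycleTops_attachStep (g := g) (S := S) le_rfl]
  have hnot : n + 1 ∉ cycleTops n₀ K n (attachStep g (n + 1) S) := fun hmem => by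
    have := (mem_cycleTops.1 hmem).1
    omega
  rw [← Finset.card_insert_of_notMem hnot]
  congr 1
  ext v
  rw [Finset.mem_insert, mem_cycleTops, mem_cycleTops]
  constructor
  · rintro ⟨hv, hc⟩
    by_cases hvn : v = n + 1
    · exact Or.inl hvn
    · exact Or.inr ⟨by omega, hc⟩
  · rintro (rfl | ⟨hv, hc⟩)
    · exact ⟨by omega, h⟩
    · exact ⟨by omega, hc⟩

end Paths

section CycleCount

variable {g : SimpleGraph ℕ} {n₀ n K : ℕ}

theorem IsCycleTop.exists_copy {v : ℕ} (h : IsCycleTop n₀ K g v) :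
    ∃ f : SimpleGraph.Copy (SimpleGraph.cycleGraph (K + 2)) g,
      (∀ i, n₀ < f i) ∧ (∀ i, f i ≤ v) ∧ ∃ i, f i = v := by
  obtain ⟨p, hp, hpv, hadj⟩ := h
  have step : ∀ a b : Fin (K + 2), (a - b).val = 1 → g.Adj (p a) (p b) := by
    intro a b hab
    have ha := a.isLt
    have hb := b.isLt
    rcases le_or_gt b a with hle | hlt
    · rw [Fin.sub_val_of_le hle] at hab
      rw [show (a : ℕ) = b + 1 by omega]
      exact (hp.adj b (by omega)).symm
    · rw [Fin.coe_sub_iff_lt.2 hlt] at hab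
      have h0 : (a : ℕ) = 0 := by omega
      have h1 : (b : ℕ) = K + 1 := by omega
      rw [h0, h1, hpv]
      exact hadj.symm
  refine ⟨⟨⟨fun i => p i, ?_⟩, ?_⟩, fun i => hp.lt i (by omega), fun i => hp.le i (by omega),
    Fin.last _, hpv⟩
  · intro a b hab
    rw [SimpleGraph.cycleGraph_adj'] at hab
    exact hab.elim (step a b) fun h => (step b a h).symm
  · intro a b hab
    exact Fin.ext (hp.inj a (by omega) b (by omega) hab)

theorem SupportedOn.finite_copies (hg : SupportedOn n g) :
    Finite (SimpleGraph.Copy (SimpleGraph.cycleGraph (K + 2)) g) := by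
  have hmem : ∀ (f : SimpleGraph.Copy (SimpleGraph.cycleGraph (K + 2)) g) i,
      f i ∈ Finset.Icc 1 n := fun f i => by
    refine hg (f i) (f (i + 1)) (f.toHom.map_adj ?_)
    rw [SimpleGraph.cycleGraph_adj]
    simp
  refine Finite.of_injective
    (fun f i => (⟨f i, hmem f i⟩ : Finset.Icc 1 n)) fun f f' hff' => ?_
  refine DFunLike.ext _ _ fun i => ?_
  exact congrArg Subtype.val (congrFun hff' i)

theorem SupportedOn.card_cycleTops_le (hg : SupportedOn n g) :
    (cycleTops n₀ K n g).card ≤ cycleCountOutside g (K + 2) n₀ := by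
  have hfin : {C : g.Subgraph | C.verts ⊆ {v : ℕ | n₀ < v} ∧
      Nonempty (C.coe ≃g SimpleGraph.cycleGraph (K + 2))}.Finite := by
    have := hg.finite_copies (K := K)
    refine (Set.finite_range (SimpleGraph.Copy.toSubgraph
      (A := SimpleGraph.cycleGraph (K + 2)) (B := g))).subset ?_
    rintro C ⟨-, ⟨e⟩⟩
    rw [SimpleGraph.Copy.range_toSubgraph]
    exact ⟨e.symm⟩
  have hex : ∀ v : ℕ, ∃ C : g.Subgraph, v ∈ cycleTops n₀ K n g →
      (C.verts ⊆ {v : ℕ | n₀ < v} ∧ Nonempty (C.coe ≃g SimpleGraph.cycleGraph (K + 2))) ∧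
        IsGreatest C.verts v := by
    intro v
    by_cases hv : v ∈ cycleTops n₀ K n g
    · obtain ⟨f, hlt, hle, i, hi⟩ := (mem_cycleTops.1 hv).2.exists_copy
      have hverts : f.toSubgraph.verts = Set.range f := by
        simp [SimpleGraph.Copy.toSubgraph]
      refine ⟨f.toSubgraph, fun _ => ⟨⟨?_, ⟨f.isoToSubgraph.symm⟩⟩, ?_⟩⟩
      · rw [hverts]
        rintro _ ⟨j, rfl⟩
        exact hlt j
      · rw [hverts]
        refine ⟨⟨i, hi⟩, ?_⟩
        rintro _ ⟨j, rfl⟩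
        exact hle j
    · exact ⟨⊥, fun h => absurd h hv⟩
  choose C hC using hex
  rw [cycleCountOutside, ← Set.ncard_coe_finset]
  refine Set.ncard_le_ncard_of_injOn C (fun v hv => (hC v hv).1) (fun v hv w hw h => ?_) hfin
  exact (hC v hv).2.unique (h ▸ (hC w hw).2)

end CycleCount

section Drift

variable {g : SimpleGraph ℕ} {n₀ n m d K : ℕ} {S : Finset ℕ}

theorem sum_survive_add_le_card_openEnds {first : ℕ → ℕ}
    (hfirst : ∀ v ∈ openEnds m n₀ n K g, OpenPath m n₀ n K g (first v) v) :
    ∑ v ∈ openEnds m n₀ n K g,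
        ((1 : ℝ) - (if v ∈ S then 1 else 0) - (if first v ∈ S then 1 else 0)) +
      (if n + 1 ∈ openEnds m n₀ (n + 1) K (attachStep g (n + 1) S) then 1 else 0) ≤
      ((openEnds m n₀ (n + 1) K (attachStep g (n + 1) S)).card : ℝ) := by
  set E := openEnds m n₀ n K g
  set E' := openEnds m n₀ (n + 1) K (attachStep g (n + 1) S)
  have hsub : E.filter (fun v => v ∉ S ∧ first v ∉ S) ⊆ E'.erase (n + 1) := fun v hv => by
    obtain ⟨hvE, hv1, hv2⟩ := Finset.mem_filter.1 hv
    have hle := Finset.mem_Icc.1 (hfirst v hvE).end_mem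
    exact Finset.mem_erase.2 ⟨by omega, mem_openEnds.2 ⟨_, (hfirst v hvE).survive hv2 hv1⟩⟩
  have h1 : ∑ v ∈ E, ((1 : ℝ) - (if v ∈ S then 1 else 0) - (if first v ∈ S then 1 else 0)) ≤
      ((E'.erase (n + 1)).card : ℝ) := by
    calc _ ≤ ∑ v ∈ E, (if v ∉ S ∧ first v ∉ S then (1 : ℝ) else 0) :=
          Finset.sum_le_sum fun v _ => by
            by_cases h1 : v ∈ S <;> by_cases h2 : first v ∈ S <;> simp [h1, h2]
      _ = ((E.filter (fun v => v ∉ S ∧ first v ∉ S)).card : ℝ) := Finset.sum_boole _ _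
      _ ≤ _ := by exact_mod_cast Finset.card_le_card hsub
  split_ifs with h
  · rw [← Finset.card_erase_add_one h]
    push_cast
    linarith
  · rw [Finset.erase_eq_of_notMem h] at h1
    linarith

theorem one_sub_div_le_one_sub_div {L : ℕ} (hL : 1 ≤ L) (hn : 1 ≤ n) (h : n ≤ (2 * m + 1) * L) :
    (1 : ℝ) - 2 * m * (2 * m + 1) / n ≤ 1 - m / L - m / L := by
  have hL' : (0 : ℝ) < L := by exact_mod_cast hL
  have hn' : (0 : ℝ) < n := by exact_mod_cast hn
  have h' : (n : ℝ) ≤ (2 * m + 1) * L := by exact_mod_cast h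
  have : (m : ℝ) / L ≤ m * (2 * m + 1) / n := by
    rw [div_le_div_iff₀ hL' hn']
    have : (0 : ℝ) ≤ m := Nat.cast_nonneg m
    nlinarith
  have e : 2 * (m : ℝ) * (2 * m + 1) / n = m * (2 * m + 1) / n + m * (2 * m + 1) / n := by ring
  rw [e]
  linarith

theorem Admissible.drift_openEnds (hg : Admissible m n g) (hm : 2 ≤ m) (hd : 2 * m < d)
    (hn : m ≤ n) :
    (1 - 2 * m * (2 * m + 1) / n) * ((openEnds m n₀ n K g).card : ℝ) +
      subsetAvg (lowDegSet d g n) m (fun S =>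
        if n + 1 ∈ openEnds m n₀ (n + 1) K (attachStep g (n + 1) S) then 1 else 0) ≤
      subsetAvg (lowDegSet d g n) m
        (fun S => ((openEnds m n₀ (n + 1) K (attachStep g (n + 1) S)).card : ℝ)) := by
  have hL := hg.le_card_lowDegSet hd hn
  obtain ⟨first, hfirst⟩ := exists_openPath_start m n₀ n K g
  refine le_trans ?_ (subsetAvg_mono fun S _ _ => sum_survive_add_le_card_openEnds hfirst)
  rw [subsetAvg_add, subsetAvg_sum]
  refine add_le_add_left ?_ _
  rw [mul_comm, ← nsmul_eq_mul]
  refine Finset.card_nsmul_le_sum _ _ _ fun v hv => ?_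
  rw [subsetAvg_sub, subsetAvg_sub, subsetAvg_const hL,
    subsetAvg_mem (by omega) hL ((hfirst v hv).end_mem_lowDegSet (by omega)),
    subsetAvg_mem (by omega) hL ((hfirst v hv).start_mem_lowDegSet (by omega))]
  exact one_sub_div_le_one_sub_div (by omega) (by omega) (hg.le_mul_card_lowDegSet hd)

theorem Admissible.drift_openEnds_zero (hg : Admissible m n g) (hm : 2 ≤ m) (hd : 2 * m < d)
    (hn : m ≤ n) (hn₀ : n₀ ≤ n) :
    (1 - 2 * m * (2 * m + 1) / n) * ((openEnds m n₀ n 0 g).card : ℝ) + 1 ≤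
      subsetAvg (lowDegSet d g n) m
        (fun S => ((openEnds m n₀ (n + 1) 0 (attachStep g (n + 1) S)).card : ℝ)) := by
  refine le_trans (le_of_eq ?_) (hg.drift_openEnds hm hd hn)
  congr 1
  refine (subsetAvg_const (hg.le_card_lowDegSet hd hn) 1).symm.trans
    (subsetAvg_congr fun S hS hSm => (if_pos ?_).symm)
  exact mem_openEnds.2 ⟨_, openPath_new hg.supportedOn hn₀ (hS.trans lowDegSet_subset) hSm⟩

theorem Admissible.drift_openEnds_succ (hg : Admissible m n g) (hm : 2 ≤ m) (hd : 2 * m < d)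
    (hn : 2 * m * (2 * m + 1) ≤ n) :
    (1 - 2 * m * (2 * m + 1) / n) * ((openEnds m n₀ n (K + 1) g).card : ℝ) +
      (openEnds m n₀ n K g).card / (2 * n) ≤
      subsetAvg (lowDegSet d g n) m
        (fun S => ((openEnds m n₀ (n + 1) (K + 1) (attachStep g (n + 1) S)).card : ℝ)) := by
  have hmn : m ≤ n := by nlinarith
  have hL := hg.le_card_lowDegSet hd hmn
  have hL2 : 2 * m ≤ (lowDegSet d g n).card := by
    have := hg.le_mul_card_lowDegSet hd
    by_contra! h
    nlinarith
  have hLn : (lowDegSet d g n).card ≤ n := card_lowDegSet_le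
  set L := (lowDegSet d g n).card with hLdef
  refine le_trans (add_le_add_right ?_ _) (hg.drift_openEnds hm hd hmn)
  obtain ⟨first, hfirst⟩ := exists_openPath_start m n₀ n K g
  have hm0 : (0 : ℝ) < m := by norm_cast; omega
  have hn0 : (0 : ℝ) < n := by norm_cast; omega
  have hpoint : ∀ S ⊆ lowDegSet d g n, S.card = m →
      ∑ v ∈ openEnds m n₀ n K g, ((if v ∈ S then (1 : ℝ) else 0) -
        (if first v ≠ v then (if first v ∈ S ∧ v ∈ S then 1 else 0) else 0)) ≤
      (if n + 1 ∈ openEnds m n₀ (n + 1) (K + 1) (attachStep g (n + 1) S) then (1 : ℝ) else 0)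
        * m := by
    intro S hS hSm
    split_ifs with hnew
    · calc _ ≤ ∑ v ∈ openEnds m n₀ n K g, (if v ∈ S then (1 : ℝ) else 0) :=
            Finset.sum_le_sum fun v _ => by
              rw [sub_le_self_iff]
              split_ifs <;> norm_num
        _ = (((openEnds m n₀ n K g).filter (· ∈ S)).card : ℝ) := Finset.sum_boole _ _
        _ ≤ 1 * m := by
          rw [one_mul, ← hSm]
          exact_mod_cast Finset.card_le_card fun v hv => (Finset.mem_filter.1 hv).2
    · rw [zero_mul]
      refine Finset.sum_nonpos fun v hv => ?_
      by_cases hvS : v ∈ S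
      · have hne : ¬ (first v ∉ S ∨ first v = v) := fun h =>
          hnew (mem_openEnds.2 ⟨_, (hfirst v hv).extend hg.supportedOn
            (hS.trans lowDegSet_subset) hSm hvS h⟩)
        push Not at hne
        simp [hvS, hne.1, hne.2]
      · simp [hvS]
  have havg := subsetAvg_mono hpoint
  rw [subsetAvg_mul_const, subsetAvg_sum] at havg
  have hterm : ∀ v ∈ openEnds m n₀ n K g, (m : ℝ) / (2 * n) ≤
      subsetAvg (lowDegSet d g n) m (fun S => (if v ∈ S then (1 : ℝ) else 0) -
        (if first v ≠ v then (if first v ∈ S ∧ v ∈ S then 1 else 0) else 0)) := by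
    intro v hv
    have hL0 : (0 : ℝ) < L := by norm_cast; omega
    have hL1 : (0 : ℝ) < (L : ℝ) - 1 := by
      have : (2 : ℝ) ≤ L := by norm_cast; omega
      linarith
    have hLn' : (L : ℝ) ≤ n := by exact_mod_cast hLn
    have hL2' : 2 * (m : ℝ) ≤ L := by exact_mod_cast hL2
    have hbase : (m : ℝ) / (2 * n) ≤ m / (2 * L) := by gcongr
    have hhalf : (m : ℝ) * (m - 1) / (L * (L - 1)) ≤ m / (2 * L) := by
      rw [div_le_div_iff₀ (by positivity) (by positivity)]
      have : 0 ≤ (m : ℝ) * L * ((L - 1) - 2 * (m - 1)) :=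
        mul_nonneg (by positivity) (by linarith)
      nlinarith
    have hsum : (m : ℝ) / L = m / (2 * L) + m / (2 * L) := by field_simp; norm_num
    rw [subsetAvg_sub, subsetAvg_mem (by omega) hL ((hfirst v hv).end_mem_lowDegSet (by omega))]
    by_cases hne : first v ≠ v
    · simp only [if_pos hne]
      rw [subsetAvg_mem_mem hm hL ((hfirst v hv).start_mem_lowDegSet (by omega))
        ((hfirst v hv).end_mem_lowDegSet (by omega)) hne]
      linarith
    · simp only [if_neg hne]
      rw [subsetAvg_const hL, sub_zero]
      have : (0 : ℝ) ≤ m / (2 * L) := by positivity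
      linarith
  have hfinal := (Finset.card_nsmul_le_sum _ _ _ hterm).trans havg
  rw [nsmul_eq_mul] at hfinal
  have e : ((openEnds m n₀ n K g).card : ℝ) * (m / (2 * n)) =
      (openEnds m n₀ n K g).card / (2 * n) * m := by ring
  rw [e] at hfinal
  exact le_of_mul_le_mul_right hfinal hm0

open Classical in
theorem Admissible.card_openEnds_div_le (hg : Admissible m n g) (hm : 2 ≤ m) (hd : 2 * m < d)
    (hn : m ≤ n) (hK : 1 ≤ K) :
    ((openEnds m n₀ n K g).card : ℝ) / n ^ 2 ≤
      subsetAvg (lowDegSet d g n) m (fun S =>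
        if IsCycleTop n₀ K (attachStep g (n + 1) S) (n + 1) then 1 else 0) := by
  have hL := hg.le_card_lowDegSet hd hn
  have hLn : (lowDegSet d g n).card ≤ n := card_lowDegSet_le
  obtain ⟨first, hfirst⟩ := exists_openPath_start m n₀ n K g
  have hm0 : (0 : ℝ) < m := by norm_cast; omega
  have hpoint : ∀ S ⊆ lowDegSet d g n, S.card = m →
      ∑ v ∈ openEnds m n₀ n K g, (if first v ∈ S ∧ v ∈ S then (1 : ℝ) else 0) ≤
      (if IsCycleTop n₀ K (attachStep g (n + 1) S) (n + 1) then (1 : ℝ) else 0) * m := by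
    intro S hS hSm
    split_ifs with hnew
    · rw [Finset.sum_boole, one_mul]
      have hsub : (openEnds m n₀ n K g).filter (fun v => first v ∈ S ∧ v ∈ S) ⊆ S :=
        fun v hv => (Finset.mem_filter.1 hv).2.2
      exact_mod_cast (Finset.card_le_card hsub).trans_eq hSm
    · rw [zero_mul]
      refine Finset.sum_nonpos fun v hv => ?_
      rw [if_neg fun h => hnew ((hfirst v hv).isCycleTop hg.supportedOn
        (hS.trans lowDegSet_subset) h.1 h.2)]
  have havg := subsetAvg_mono hpoint
  rw [subsetAvg_mul_const, subsetAvg_sum] at havg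
  have hterm : ∀ v ∈ openEnds m n₀ n K g, (m : ℝ) / n ^ 2 ≤
      subsetAvg (lowDegSet d g n) m (fun S => if first v ∈ S ∧ v ∈ S then (1 : ℝ) else 0) := by
    intro v hv
    rw [subsetAvg_mem_mem hm hL ((hfirst v hv).start_mem_lowDegSet (by omega))
        ((hfirst v hv).end_mem_lowDegSet (by omega)) ((hfirst v hv).start_ne_end hK)]
    set L := (lowDegSet d g n).card with hLdef
    have hL2 : (2 : ℝ) ≤ L := by norm_cast; omega
    have hm2 : (2 : ℝ) ≤ m := by exact_mod_cast hm
    have hLn' : (L : ℝ) ≤ n := by exact_mod_cast hLn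
    have hpos : (0 : ℝ) < L * (L - 1) := mul_pos (by linarith) (by linarith)
    refine div_le_div₀ (by nlinarith) (by nlinarith) hpos ?_
    nlinarith
  have hfinal := (Finset.card_nsmul_le_sum _ _ _ hterm).trans havg
  rw [nsmul_eq_mul] at hfinal
  have e : ((openEnds m n₀ n K g).card : ℝ) * (m / n ^ 2) =
      (openEnds m n₀ n K g).card / n ^ 2 * m := by ring
  rw [e] at hfinal
  exact le_of_mul_le_mul_right hfinal hm0

end Drift

section ReachableGraphs

variable {m d n : ℕ} {g : SimpleGraph ℕ}

open Classical in
/-- The graphs that the attachment process can reach at time `n` (for `n ≥ m`). -/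
noncomputable def reachable (m d : ℕ) : ℕ → Finset (SimpleGraph ℕ)
  | 0 => {initGraph m}
  | n + 1 => if n + 1 ≤ m then {initGraph m} else
      (reachable m d n).biUnion fun g =>
        ((lowDegSet d g n).powersetCard m).image (attachStep g (n + 1))

theorem reachable_self (m d : ℕ) : reachable m d m = {initGraph m} := by
  cases m <;> simp [reachable]

theorem mem_reachable_succ (hn : m ≤ n) : g ∈ reachable m d (n + 1) ↔
    ∃ g' ∈ reachable m d n, ∃ S ⊆ lowDegSet d g' n, S.card = m ∧ attachStep g' (n + 1) S = g := by
  rw [reachable, if_neg (by omega)]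
  simp [and_assoc]

theorem admissible_of_mem_reachable (hn : m ≤ n) (hg : g ∈ reachable m d n) :
    Admissible m n g := by
  induction n, hn using Nat.le_induction generalizing g with
  | base =>
    rw [reachable_self, Finset.mem_singleton] at hg
    rw [hg]
    exact admissible_initGraph m
  | succ n hn ih =>
    obtain ⟨g', hg', S, hS, hSm, rfl⟩ := (mem_reachable_succ hn).1 hg
    exact (ih hg').attach (hS.trans lowDegSet_subset) hSm

theorem sum_reachable_succ (hn : m ≤ n) (F : SimpleGraph ℕ → ℝ) :
    ∑ g ∈ reachable m d (n + 1), F g = ∑ g ∈ reachable m d n,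
      ∑ S ∈ (lowDegSet d g n).powersetCard m, F (attachStep g (n + 1) S) := by
  classical
  have hinj : ∀ g ∈ reachable m d n, ∀ g' ∈ reachable m d n,
      ∀ S ∈ (lowDegSet d g n).powersetCard m, ∀ S' ∈ (lowDegSet d g' n).powersetCard m,
      attachStep g (n + 1) S = attachStep g' (n + 1) S' → g = g' ∧ S = S' := by
    intro g hg g' hg' S hS S' hS' h
    rw [Finset.mem_powersetCard] at hS hS'
    exact (admissible_of_mem_reachable hn hg).supportedOn.attachStep_inj
      (admissible_of_mem_reachable hn hg').supportedOn
      (hS.1.trans lowDegSet_subset) (hS'.1.trans lowDegSet_subset) h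
  rw [reachable, if_neg (by omega), Finset.sum_biUnion]
  · refine Finset.sum_congr (by congr!) fun g hg => ?_
    exact Finset.sum_image fun S hS S' hS' h => (hinj g hg g hg S hS S' hS' h).2
  · intro g hg g' hg' hne
    rw [Function.onFun, Finset.disjoint_left]
    intro h hh hh'
    obtain ⟨S, hS, rfl⟩ := Finset.mem_image.1 hh
    obtain ⟨S', hS', h'⟩ := Finset.mem_image.1 hh'
    exact hne (hinj g hg g' hg' S hS S' hS' h'.symm).1

variable {Ω : Type*} [MeasurableSpace Ω] {μ : Measure Ω} {G : ℕ → Ω → SimpleGraph ℕ}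

theorem IsUAProcess.sum_measureReal [IsFiniteMeasure μ] (hG : IsUAProcess m d μ G) (n : ℕ)
    (s : Finset (SimpleGraph ℕ)) :
    ∑ g ∈ s, μ.real {ω | G n ω = g} = μ.real {ω | G n ω ∈ s} := by
  have : {ω | G n ω ∈ s} = ⋃ g ∈ s, {ω | G n ω = g} := by ext; simp
  rw [this, measureReal_biUnion_finset _ fun g _ => hG.1 n g]
  intro g _ g' _ hne
  rw [Function.onFun, Set.disjoint_left]
  rintro ω rfl h
  exact hne h

theorem IsUAProcess.le_measureReal_attachStep [IsFiniteMeasure μ] (hG : IsUAProcess m d μ G)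
    (hn : m ≤ n) {S : Finset ℕ} (hS : S ⊆ lowDegSet d g n) (hSm : S.card = m) :
    μ.real {ω | G n ω = g} / ((lowDegSet d g n).card.choose m : ℝ) ≤
      μ.real {ω | G (n + 1) ω = attachStep g (n + 1) S} := by
  have h := congrArg ENNReal.toReal (hG.2.2 n hn g S hS hSm)
  rw [ENNReal.toReal_div, ENNReal.toReal_natCast] at h
  rw [measureReal_def, ← h]
  exact measureReal_mono Set.inter_subset_left

/-- The expectation of `f (G n)`, as a finite sum over the reachable graphs. -/
noncomputable def graphMean (m d : ℕ) (μ : Measure Ω) (G : ℕ → Ω → SimpleGraph ℕ) (n : ℕ)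
    (f : SimpleGraph ℕ → ℝ) : ℝ :=
  ∑ g ∈ reachable m d n, μ.real {ω | G n ω = g} * f g

theorem graphMean_mono (hn : m ≤ n) {f f' : SimpleGraph ℕ → ℝ}
    (h : ∀ g, Admissible m n g → f g ≤ f' g) :
    graphMean m d μ G n f ≤ graphMean m d μ G n f' :=
  Finset.sum_le_sum fun g hg => mul_le_mul_of_nonneg_left
    (h g (admissible_of_mem_reachable hn hg)) measureReal_nonneg

theorem graphMean_congr (hn : m ≤ n) {f f' : SimpleGraph ℕ → ℝ}
    (h : ∀ g, Admissible m n g → f g = f' g) :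
    graphMean m d μ G n f = graphMean m d μ G n f' :=
  le_antisymm (graphMean_mono hn fun g hg => (h g hg).le)
    (graphMean_mono hn fun g hg => (h g hg).ge)

theorem graphMean_add (f f' : SimpleGraph ℕ → ℝ) :
    graphMean m d μ G n (fun g => f g + f' g) =
      graphMean m d μ G n f + graphMean m d μ G n f' := by
  simp only [graphMean, mul_add, Finset.sum_add_distrib]

theorem graphMean_sub (f f' : SimpleGraph ℕ → ℝ) :
    graphMean m d μ G n (fun g => f g - f' g) =
      graphMean m d μ G n f - graphMean m d μ G n f' := by
  simp only [graphMean, mul_sub, Finset.sum_sub_distrib]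

theorem graphMean_const_mul (c : ℝ) (f : SimpleGraph ℕ → ℝ) :
    graphMean m d μ G n (fun g => c * f g) = c * graphMean m d μ G n f := by
  simp only [graphMean, Finset.mul_sum]
  exact Finset.sum_congr rfl fun g _ => by ring

theorem graphMean_nonneg {f : SimpleGraph ℕ → ℝ} (h : ∀ g, 0 ≤ f g) :
    0 ≤ graphMean m d μ G n f :=
  Finset.sum_nonneg fun g _ => mul_nonneg measureReal_nonneg (h g)

variable [IsProbabilityMeasure μ]

theorem IsUAProcess.sum_reachable_eq_one (hG : IsUAProcess m d μ G) (hd : 2 * m < d)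
    (hn : m ≤ n) : ∑ g ∈ reachable m d n, μ.real {ω | G n ω = g} = 1 := by
  induction n, hn using Nat.le_induction with
  | base => simp [reachable_self, hG.2.1]
  | succ n hn ih =>
    refine le_antisymm ?_ ?_
    · rw [hG.sum_measureReal]
      exact measureReal_le_one
    · rw [sum_reachable_succ hn, ← ih]
      refine Finset.sum_le_sum fun g hg => ?_
      have hL := (admissible_of_mem_reachable hn hg).le_card_lowDegSet hd hn
      rw [← subsetAvg_const hL (μ.real {ω | G n ω = g}), subsetAvg, Finset.sum_div]
      refine Finset.sum_le_sum fun S hS => ?_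
      rw [Finset.mem_powersetCard] at hS
      exact hG.le_measureReal_attachStep hn hS.1 hS.2

theorem IsUAProcess.measureReal_attachStep (hG : IsUAProcess m d μ G) (hd : 2 * m < d)
    (hn : m ≤ n) (hg : g ∈ reachable m d n) {S : Finset ℕ}
    (hS : S ∈ (lowDegSet d g n).powersetCard m) :
    μ.real {ω | G (n + 1) ω = attachStep g (n + 1) S} =
      μ.real {ω | G n ω = g} / ((lowDegSet d g n).card.choose m : ℝ) := by
  have hle : ∀ g, ∀ S ∈ (lowDegSet d g n).powersetCard m,
      μ.real {ω | G n ω = g} / ((lowDegSet d g n).card.choose m : ℝ) ≤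
        μ.real {ω | G (n + 1) ω = attachStep g (n + 1) S} := fun g S hS => by
    rw [Finset.mem_powersetCard] at hS
    exact hG.le_measureReal_attachStep hn hS.1 hS.2
  have htot : ∑ g ∈ reachable m d n, ∑ S ∈ (lowDegSet d g n).powersetCard m,
        μ.real {ω | G n ω = g} / ((lowDegSet d g n).card.choose m : ℝ) =
      ∑ g ∈ reachable m d n, ∑ S ∈ (lowDegSet d g n).powersetCard m,
        μ.real {ω | G (n + 1) ω = attachStep g (n + 1) S} := by
    rw [← sum_reachable_succ hn fun g => μ.real {ω | G (n + 1) ω = g},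
      hG.sum_reachable_eq_one hd (by omega), ← hG.sum_reachable_eq_one hd hn]
    refine Finset.sum_congr rfl fun g hg => ?_
    have hL := (admissible_of_mem_reachable hn hg).le_card_lowDegSet hd hn
    rw [← Finset.sum_div]
    exact subsetAvg_const hL _
  rw [Finset.sum_eq_sum_iff_of_le fun g _ => Finset.sum_le_sum (hle g)] at htot
  exact (((Finset.sum_eq_sum_iff_of_le (hle g)).1 (htot g hg)) S hS).symm

theorem IsUAProcess.graphMean_succ (hG : IsUAProcess m d μ G) (hd : 2 * m < d) (hn : m ≤ n)
    (f : SimpleGraph ℕ → ℝ) : graphMean m d μ G (n + 1) f = graphMean m d μ G n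
      fun g => subsetAvg (lowDegSet d g n) m fun S => f (attachStep g (n + 1) S) := by
  rw [graphMean, sum_reachable_succ hn, graphMean]
  refine Finset.sum_congr rfl fun g hg => ?_
  rw [subsetAvg, mul_div_assoc', mul_div_right_comm, Finset.mul_sum]
  refine Finset.sum_congr rfl fun S hS => ?_
  rw [hG.measureReal_attachStep hd hn hg hS]

theorem IsUAProcess.graphMean_const (hG : IsUAProcess m d μ G) (hd : 2 * m < d) (hn : m ≤ n)
    (c : ℝ) : graphMean m d μ G n (fun _ => c) = c := by
  rw [graphMean, ← Finset.sum_mul, hG.sum_reachable_eq_one hd hn, one_mul]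

end ReachableGraphs

section RealSequences

theorem exists_linear_growth_of_drift {b : ℝ} (hb : 0 ≤ b) {c : ℝ} (hc : 0 ≤ c) {y : ℕ → ℝ}
    (hy0 : ∀ n, 0 ≤ y n) (hy : ∀ᶠ n : ℕ in atTop, (1 - b / n) * y n + c ≤ y (n + 1)) :
    ∀ᶠ n : ℕ in atTop, c / (2 * (b + 1)) * n ≤ y n := by
  obtain ⟨M, hM⟩ := eventually_atTop.1 (hy.and (eventually_ge_atTop 1))
  have hM1 : 1 ≤ M := (hM M le_rfl).2
  set e := c / (b + 1) with he
  have he0 : 0 ≤ e := by positivity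
  have hce : c = e * b + e := by rw [he]; field_simp
  obtain ⟨M', hM'⟩ := exists_nat_ge (max b M)
  have hM'b : b ≤ M' := (le_max_left _ _).trans hM'
  have hM'M : M ≤ M' := by exact_mod_cast (le_max_right _ _).trans hM'
  have key : ∀ n ≥ M', e * ((n : ℝ) - M') ≤ y n := by
    intro n hn
    induction n, hn using Nat.le_induction with
    | base => simpa using hy0 M'
    | succ n hn ih =>
      have hstep := (hM n (hM'M.trans hn)).1
      have hn' : (M' : ℝ) ≤ n := by exact_mod_cast hn
      have hn0 : (0 : ℝ) < n := by norm_cast; omega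
      have hq : 0 ≤ 1 - b / n := by
        rw [sub_nonneg, div_le_one hn0]
        linarith
      have h1 := mul_le_mul_of_nonneg_left ih hq
      have h2 : b / n * (e * ((n : ℝ) - M')) ≤ e * b := by
        rw [div_mul_eq_mul_div, div_le_iff₀ hn0]
        have : 0 ≤ b * e * (M' : ℝ) := by positivity
        nlinarith
      push_cast
      nlinarith
  filter_upwards [eventually_ge_atTop (2 * M')] with n hn
  refine le_trans ?_ (key n (by omega))
  have hn' : 2 * (M' : ℝ) ≤ n := by exact_mod_cast hn
  have : c / (2 * (b + 1)) = e / 2 := by rw [he]; field_simp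
  rw [this]
  nlinarith

theorem exists_linear_growth_of_iterated_drift {b : ℝ} (hb : 0 ≤ b) (K : ℕ) :
    ∃ κ > 0, ∀ u : ℝ, 0 ≤ u → ∀ x : ℕ → ℕ → ℝ, (∀ k n, 0 ≤ x k n) →
      (∀ᶠ n : ℕ in atTop, (1 - b / n) * x 0 n + u ≤ x 0 (n + 1)) →
      (∀ k, ∀ᶠ n : ℕ in atTop, (1 - b / n) * x (k + 1) n + x k n / (2 * n) ≤ x (k + 1) (n + 1)) →
      ∀ᶠ n : ℕ in atTop, κ * u * n ≤ x K n := by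
  induction K with
  | zero =>
    refine ⟨1 / (2 * (b + 1)), by positivity, fun u hu x hx h0 _ => ?_⟩
    filter_upwards [exists_linear_growth_of_drift hb hu (hx 0) h0] with n hn
    convert hn using 2
    ring
  | succ K ih =>
    obtain ⟨κ, hκ, h⟩ := ih
    refine ⟨κ / 2 / (2 * (b + 1)), by positivity, fun u hu x hx h0 hs => ?_⟩
    have hdrift : ∀ᶠ n : ℕ in atTop, (1 - b / n) * x (K + 1) n + κ * u / 2 ≤ x (K + 1) (n + 1) := by
      filter_upwards [h u hu x hx h0 hs, hs K, eventually_gt_atTop 0] with n hn hsn hn0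
      have hn0' : (0 : ℝ) < n := by exact_mod_cast hn0
      have : κ * u / 2 ≤ x K n / (2 * n) := by
        rw [div_le_div_iff₀ two_pos (by positivity)]
        linarith
      linarith
    filter_upwards [exists_linear_growth_of_drift hb (by positivity) (hx (K + 1)) hdrift]
      with n hn
    convert hn using 2
    ring

/-- A sequence whose increments eventually dominate the harmonic series is unbounded. -/
theorem not_bounded_of_harmonic_increments {c B : ℝ} (hc : 0 < c) {V : ℕ → ℝ}
    (hV : ∀ᶠ n in atTop, V n ≤ B) (h : ∀ᶠ n : ℕ in atTop, V n + c / n ≤ V (n + 1)) : False := by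
  obtain ⟨M, hM⟩ := eventually_atTop.1 (h.and hV)
  have hsum : ∀ k, ∑ i ∈ Finset.range k, c * (1 / ((i + M : ℕ) : ℝ)) ≤ V (k + M) - V M := by
    intro k
    induction k with
    | zero => simp
    | succ k ih =>
      rw [Finset.sum_range_succ]
      have := (hM (k + M) (by omega)).1
      rw [show k + 1 + M = k + M + 1 by omega, mul_one_div]
      linarith
  have hs : Summable fun i : ℕ => c * (1 / ((i + M : ℕ) : ℝ)) :=
    summable_of_sum_range_le (c := B - V M) (fun i => by positivity) fun k =>
      (hsum k).trans (by linarith [(hM (k + M) (by omega)).2])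
  rw [summable_mul_left_iff hc.ne', summable_nat_add_iff (f := fun i : ℕ => 1 / (i : ℝ))] at hs
  exact Real.not_summable_one_div_natCast hs

end RealSequences

section CycleCreation

variable {m d n₀ R s : ℕ} {Ω : Type*} [MeasurableSpace Ω] {μ : Measure Ω}
  [IsProbabilityMeasure μ] {G : ℕ → Ω → SimpleGraph ℕ}

/-- The indicator that fewer than `s` vertices of `[N]` are the largest vertex of a cycle of
length `R + 2` above `n₀`. -/
noncomputable def fewTops (s n₀ R N : ℕ) (g : SimpleGraph ℕ) : ℝ :=
  if (cycleTops n₀ R N g).card < s then 1 else 0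

theorem fewTops_nonneg {N : ℕ} (g : SimpleGraph ℕ) : 0 ≤ fewTops s n₀ R N g := by
  rw [fewTops]; split_ifs <;> norm_num

theorem fewTops_antitone {N n : ℕ} (h : N ≤ n) (g : SimpleGraph ℕ) :
    fewTops s n₀ R n g ≤ fewTops s n₀ R N g := by
  have := Finset.card_le_card (cycleTops_mono (n₀ := n₀) (K := R) (g := g) h)
  rw [fewTops, fewTops]
  split_ifs <;> first | omega | norm_num

theorem fewTops_attachStep {N n : ℕ} (h : N ≤ n) (g : SimpleGraph ℕ) (S : Finset ℕ) :
    fewTops s n₀ R N (attachStep g (n + 1) S) = fewTops s n₀ R N g := by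
  rw [fewTops, fewTops, cycleTops_attachStep h]

theorem IsUAProcess.graphMean_fewTops (hG : IsUAProcess m d μ G) (hd : 2 * m < d) {N n : ℕ}
    (hN : m ≤ N) (hn : N ≤ n) :
    graphMean m d μ G n (fewTops s n₀ R N) = graphMean m d μ G N (fewTops s n₀ R N) := by
  induction n, hn using Nat.le_induction with
  | base => rfl
  | succ n hn ih =>
    rw [hG.graphMean_succ hd (hN.trans hn), ← ih]
    refine graphMean_congr (hN.trans hn) fun g hg => ?_
    simp only [fewTops_attachStep hn]
    exact subsetAvg_const (hg.le_card_lowDegSet hd (hN.trans hn)) _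

theorem IsUAProcess.graphMean_fewTops_antitone (hG : IsUAProcess m d μ G) (hd : 2 * m < d)
    {N n : ℕ} (hN : m ≤ N) (hn : N ≤ n) :
    graphMean m d μ G n (fewTops s n₀ R n) ≤ graphMean m d μ G N (fewTops s n₀ R N) := by
  rw [← hG.graphMean_fewTops hd hN hn]
  exact graphMean_mono (hN.trans hn) fun g _ => fewTops_antitone hn g

theorem IsUAProcess.eventually_linear_openEnds (hG : IsUAProcess m d μ G) (hm : 2 ≤ m)
    (hd : 2 * m < d) (n₀ K : ℕ) : ∃ κ > 0, ∀ s R N, m ≤ N →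
      ∀ᶠ n : ℕ in atTop, κ * graphMean m d μ G N (fewTops s n₀ R N) * n ≤
        graphMean m d μ G n
          (fun g => (openEnds m n₀ n K g).card * fewTops s n₀ R N g) := by
  obtain ⟨κ, hκ, h⟩ := exists_linear_growth_of_iterated_drift
    (b := 2 * m * (2 * m + 1)) (by positivity) K
  refine ⟨κ, hκ, fun s R N hN => h _ (graphMean_nonneg fewTops_nonneg)
    (fun k n => graphMean m d μ G n
      (fun g => (openEnds m n₀ n k g).card * fewTops s n₀ R N g))
    (fun k n => graphMean_nonneg fun g => mul_nonneg (Nat.cast_nonneg _) (fewTops_nonneg g))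
    ?_ fun k => ?_⟩
  · filter_upwards [eventually_ge_atTop N, eventually_ge_atTop n₀] with n hn hn₀
    have hmn := hN.trans hn
    rw [hG.graphMean_succ hd hmn, ← hG.graphMean_fewTops hd hN hn, ← graphMean_const_mul,
      ← graphMean_add]
    refine graphMean_mono hmn fun g hg => ?_
    simp only [fewTops_attachStep hn]
    rw [subsetAvg_mul_const, ← mul_assoc, ← add_one_mul]
    exact mul_le_mul_of_nonneg_right (hg.drift_openEnds_zero hm hd hmn hn₀) (fewTops_nonneg g)
  · filter_upwards [eventually_ge_atTop N, eventually_ge_atTop (2 * m * (2 * m + 1))]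
      with n hn hn'
    have hmn := hN.trans hn
    rw [hG.graphMean_succ hd hmn, ← graphMean_const_mul,
      div_eq_inv_mul (graphMean _ _ _ _ _ _), ← graphMean_const_mul, ← graphMean_add]
    refine graphMean_mono hmn fun g hg => ?_
    simp only [fewTops_attachStep hn]
    rw [subsetAvg_mul_const, ← mul_assoc, ← mul_assoc, ← add_mul, ← div_eq_inv_mul]
    exact mul_le_mul_of_nonneg_right (hg.drift_openEnds_succ hm hd hn') (fewTops_nonneg g)

/-- The expected truncated number of cycle tops grows by at least the expected number of open
paths divided by `n ^ 2`. -/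
theorem IsUAProcess.graphMean_min_card_succ (hG : IsUAProcess m d μ G) (hm : 2 ≤ m)
    (hd : 2 * m < d) (hR : 1 ≤ R) {n : ℕ} (hn : m ≤ n) :
    graphMean m d μ G n (fun g => (min (cycleTops n₀ R n g).card s : ℕ)) +
      graphMean m d μ G n (fun g => (openEnds m n₀ n R g).card * fewTops s n₀ R n g) / n ^ 2 ≤
    graphMean m d μ G (n + 1) (fun g => (min (cycleTops n₀ R (n + 1) g).card s : ℕ)) := by
  classical
  rw [hG.graphMean_succ hd hn, div_eq_inv_mul, ← graphMean_const_mul, ← graphMean_add]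
  refine graphMean_mono hn fun g hg => ?_
  have hL := hg.le_card_lowDegSet hd hn
  have hpoint : ∀ S : Finset ℕ, ((min (cycleTops n₀ R n g).card s : ℕ) : ℝ) +
      (if IsCycleTop n₀ R (attachStep g (n + 1) S) (n + 1) then 1 else 0) * fewTops s n₀ R n g ≤
      ((min (cycleTops n₀ R (n + 1) (attachStep g (n + 1) S)).card s : ℕ) : ℝ) := by
    intro S
    split_ifs with h
    · rw [card_cycleTops_attachStep_of_isCycleTop h, one_mul, fewTops]
      split_ifs with hs
      · norm_cast
        omega
      · rw [add_zero]
        norm_cast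
        omega
    · have := Finset.card_le_card (cycleTops_mono (n₀ := n₀) (K := R)
        (g := attachStep g (n + 1) S) (n.le_add_right 1))
      rw [cycleTops_attachStep le_rfl] at this
      rw [zero_mul, add_zero]
      norm_cast
      omega
  refine le_trans ?_ (subsetAvg_mono fun S _ _ => hpoint S)
  rw [subsetAvg_add, subsetAvg_const hL, subsetAvg_mul_const, ← mul_assoc, ← div_eq_inv_mul]
  exact add_le_add_right (mul_le_mul_of_nonneg_right (hg.card_openEnds_div_le hm hd hn hR)
    (fewTops_nonneg g)) _

theorem IsUAProcess.tendsto_graphMean_fewTops (hG : IsUAProcess m d μ G) (hm : 2 ≤ m)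
    (hd : 2 * m < d) (hR : 1 ≤ R) :
    Tendsto (fun n => graphMean m d μ G n (fewTops s n₀ R n)) atTop (𝓝 0) := by
  set u : ℕ → ℝ := fun n => graphMean m d μ G n (fewTops s n₀ R n) with hu
  have hu0 : ∀ n, 0 ≤ u n := fun n => graphMean_nonneg fewTops_nonneg
  have hanti : Antitone fun j => u (j + m) := fun i j hij =>
    hG.graphMean_fewTops_antitone hd (by omega) (by omega)
  have hbdd : BddBelow (Set.range fun j => u (j + m)) := ⟨0, by rintro _ ⟨j, rfl⟩; exact hu0 _⟩
  have hlim := tendsto_atTop_ciInf hanti hbdd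
  set α := ⨅ j, u (j + m)
  have hα_le : ∀ n ≥ m, α ≤ u n := fun n hn => by
    have := ciInf_le hbdd (n - m)
    simpa only [Nat.sub_add_cancel hn] using this
  rw [tendsto_add_atTop_iff_nat] at hlim
  have hα0 : 0 ≤ α := ge_of_tendsto' hlim hu0
  rcases hα0.eq_or_lt with h | hα
  · rwa [h]
  exfalso
  obtain ⟨κ, hκ, hgrow⟩ := hG.eventually_linear_openEnds hm hd n₀ R
  have hε : α < α + κ * α / 2 := by
    have : 0 < κ * α := mul_pos hκ hα
    linarith
  obtain ⟨N, hNu, hN⟩ := ((hlim.eventually_lt_const hε).and (eventually_ge_atTop m)).exists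
  refine not_bounded_of_harmonic_increments (c := κ * α / 2) (B := s) (by positivity)
    (V := fun n => graphMean m d μ G n
      (fun g => (min (cycleTops n₀ R n g).card s : ℕ))) ?_ ?_
  · filter_upwards [eventually_ge_atTop m] with n hn
    rw [← hG.graphMean_const hd hn (s : ℝ)]
    exact graphMean_mono hn fun g _ => by exact_mod_cast min_le_right _ _
  · filter_upwards [hgrow s R N hN, eventually_ge_atTop N, eventually_gt_atTop 0] with n hn hNn hn0
    have hmn := hN.trans hNn
    have hn0' : (0 : ℝ) < n := by exact_mod_cast hn0
    have hcompare : graphMean m d μ G n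
          (fun g => (openEnds m n₀ n R g).card * fewTops s n₀ R N g) - n * (u N - u n) ≤
        graphMean m d μ G n (fun g => (openEnds m n₀ n R g).card * fewTops s n₀ R n g) := by
      rw [hu]
      dsimp only
      rw [← hG.graphMean_fewTops hd hN hNn, ← graphMean_sub, ← graphMean_const_mul,
        ← graphMean_sub]
      refine graphMean_mono hmn fun g _ => ?_
      have h1 := fewTops_antitone (s := s) (n₀ := n₀) (R := R) hNn g
      have h2 : ((openEnds m n₀ n R g).card : ℝ) ≤ n := by exact_mod_cast card_openEnds_le
      nlinarith
    have hlower : κ * α / 2 * n ≤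
        graphMean m d μ G n (fun g => (openEnds m n₀ n R g).card * fewTops s n₀ R n g) := by
      have h1 : κ * α * n ≤ κ * u N * n := by gcongr; exact hα_le N hN
      have h2 : n * (u N - u n) ≤ n * (κ * α / 2) := by
        gcongr
        linarith [hα_le n hmn]
      linarith
    refine le_trans ?_ (hG.graphMean_min_card_succ hm hd hR hmn)
    refine add_le_add_right ?_ _
    rw [div_le_div_iff₀ hn0' (by positivity)]
    nlinarith

theorem IsUAProcess.one_sub_graphMean_fewTops_le (hG : IsUAProcess m d μ G) (hd : 2 * m < d)
    {n : ℕ} (hn : m ≤ n) :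
    ENNReal.ofReal (1 - graphMean m d μ G n (fewTops s n₀ R n)) ≤
      μ {ω | s ≤ cycleCountOutside (G n ω) (R + 2) n₀} := by
  classical
  have h : 1 - graphMean m d μ G n (fewTops s n₀ R n) = μ.real {ω | G n ω ∈
      (reachable m d n).filter fun g => s ≤ (cycleTops n₀ R n g).card} := by
    rw [← hG.sum_measureReal, Finset.sum_filter, ← hG.graphMean_const hd hn 1, ← graphMean_sub,
      graphMean]
    refine Finset.sum_congr rfl fun g _ => ?_
    rw [fewTops]
    split_ifs <;> first | omega | simp
  rw [h, ofReal_measureReal]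
  refine measure_mono fun ω hω => ?_
  obtain ⟨hmem, hs⟩ := Finset.mem_filter.1 hω
  exact hs.trans (admissible_of_mem_reachable hn hmem).supportedOn.card_cycleTops_le

end CycleCreation

/-- In the bounded-degree uniform attachment process with `m ≥ 2`, for any `s`, any `r ≥ 3`
and any `n₀`, with high probability `G_n` contains at least `s` cycles of length `r` all of
whose vertices lie in `[n] \ [n₀]`. -/
theorem uniform_attachment_cycle_lower_bound
    (m d : ℕ) (hm : 2 ≤ m) (hd : 2 * m < d)
    {Ω : Type*} [MeasurableSpace Ω] (μ : Measure Ω) [IsProbabilityMeasure μ]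
    (G : ℕ → Ω → SimpleGraph ℕ) (hG : IsUAProcess m d μ G)
    (s r n₀ : ℕ) (hr : 3 ≤ r) :
    Tendsto (fun n : ℕ => μ {ω | s ≤ cycleCountOutside (G n ω) r n₀}) atTop (𝓝 1) := by
  obtain ⟨R, rfl⟩ : ∃ R, r = R + 2 := ⟨r - 2, by omega⟩
  have hlim : Tendsto (fun n => ENNReal.ofReal (1 - graphMean m d μ G n (fewTops s n₀ R n)))
      atTop (𝓝 1) := by
    simpa using ENNReal.tendsto_ofReal
      ((hG.tendsto_graphMean_fewTops hm hd (by omega)).const_sub 1)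
  refine tendsto_of_tendsto_of_tendsto_of_le_of_le' hlim tendsto_const_nhds ?_
    (Eventually.of_forall fun n => prob_le_one)
  filter_upwards [eventually_ge_atTop m] with n hn
  exact hG.one_sub_graphMean_fewTops_le hd hn
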